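/- arXiv:2207.06393 — 3 statements merged into one kernel-verified Lean document; each statement's English description precedes it below -/
import Mathlib

section
/- Let L be a language with finitely many relation symbols (and no function or constant symbols), at least one of arity at least two, and let K be a Fraïssé class of finite L-structures, all of whose relations hold only on tuples of pairwise distinct elements, satisfying the Substructure Free Amalgamation Property (SFAP). Then every Fraïssé limit M of K is indivisible: for every k ≥ 1, every coloring c : M → {0, …, k−1}, and every element a of M, there is an L-embedding f : M → M such that c is constant on the set { f(x) : x an element of M realizing the same quantifier-free 1-type over the empty set as a }. -/
/-!
With two colours, some self-embedding of `M` sends the type of `a` into a single colour; more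
colours reduce to two by composing self-embeddings.

In the case of two colours, a self-embedding of the countable structure `M` is built one point at
a time, sending the points of the type of `a` to red points. If the construction cannot continue,
there are a finite set `A` and a type `p` over `A`, extending the type of `a`, all of whose
realizations are blue. It then suffices to embed `M` into itself so that all points of the type of
`a` realize `p` over `A`.

That embedding is again built point by point, its image being kept disjoint from `A`. The next
point must realize both `p` over `A` and a prescribed type over the finite set `B` of previous
images, and these two types agree over the empty set. `exists_sameOrbit_both` shows that SFAP
makes this possible, whatever the relations between `A` and `B`, by induction on `B`. Points not
of the type of `a` only have to avoid `A`, which disjoint amalgamation permits.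

Since `M` is ultrahomogeneous, finite partial embeddings are restrictions of automorphisms, and
types over finite sets are orbits of pointwise stabilizers; the argument is written in these
terms.
-/

open FirstOrder FirstOrder.Language FirstOrder.Language.Structure CategoryTheory

universe u v w

namespace CDP

variable {L : FirstOrder.Language.{u, v}}

/-- `x` realizes the same quantifier-free 1-type over the empty set as `a`. -/
def SameEmptyType {M : Type*} [L.Structure M] (a x : M) : Prop :=
  ∀ {n : ℕ} (R : L.Relations n),
    RelMap R (fun _ : Fin n => x) ↔ RelMap R (fun _ : Fin n => a)

/-- All relations hold only on tuples of pairwise distinct elements. -/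
def NoLoops (M : Type*) [L.Structure M] : Prop :=
  ∀ {n : ℕ} (R : L.Relations n) (t : Fin n → M), RelMap R t → Function.Injective t

/-- `D` is an extension of `B` (via the embedding `f`) by exactly the one new vertex `v`. -/
def IsOnePointExt {B D : Type*} [L.Structure B] [L.Structure D]
    (f : B ↪[L] D) (v : D) : Prop :=
  v ∉ Set.range ⇑f ∧ ∀ d : D, d = v ∨ d ∈ Set.range ⇑f

/-- `C` is an extension of `A` (via the embedding `f`) by exactly the two new vertices `v, w`. -/
def IsTwoPointExt {A C : Type*} [L.Structure A] [L.Structure C]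
    (f : A ↪[L] C) (v w : C) : Prop :=
  v ≠ w ∧ v ∉ Set.range ⇑f ∧ w ∉ Set.range ⇑f ∧
    ∀ c : C, c = v ∨ c = w ∨ c ∈ Set.range ⇑f

/-- The quantifier-free 1-type of `v` over (the copy via `f` of) `A` in `D` equals the
quantifier-free 1-type of `u` over (the copy via `g` of) `A` in `E`; here `none` stands
for the distinguished new point. -/
def QF1Eq {A D E : Type*} [L.Structure A] [L.Structure D] [L.Structure E]
    (f : A ↪[L] D) (v : D) (g : A ↪[L] E) (u : E) : Prop :=
  ∀ {n : ℕ} (R : L.Relations n) (t : Fin n → Option A),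
    RelMap R (fun i => (t i).elim v ⇑f) ↔ RelMap R (fun i => (t i).elim u ⇑g)

/-- The substructure of `D` on (the copy of) `A ∪ {v, w}` is isomorphic to the substructure of
`E` on `A ∪ {v', w'}` by the identity on `A` together with `v ↦ v'`, `w ↦ w'`. -/
def QF2Eq {A D E : Type*} [L.Structure A] [L.Structure D] [L.Structure E]
    (f : A ↪[L] D) (v w : D) (g : A ↪[L] E) (v' w' : E) : Prop :=
  ∀ {n : ℕ} (R : L.Relations n) (t : Fin n → A ⊕ Fin 2),
    RelMap R (fun i => Sum.elim (⇑f) ![v, w] (t i)) ↔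
      RelMap R (fun i => Sum.elim (⇑g) ![v', w'] (t i))

variable (K : Set (Bundled.{w} L.Structure))

/-- The disjoint (strong) amalgamation property. -/
def DAP : Prop :=
  ∀ A B C : Bundled.{w} L.Structure, A ∈ K → B ∈ K → C ∈ K →
    ∀ (f : A ↪[L] B) (g : A ↪[L] C),
      ∃ D : Bundled.{w} L.Structure, D ∈ K ∧
        ∃ (r : B ↪[L] D) (s : C ↪[L] D),
          r.comp f = s.comp g ∧
          Set.range ⇑r ∩ Set.range ⇑s = Set.range ⇑(r.comp f)

/-- The free amalgamation property: a disjoint amalgam in which no tuple satisfying a relation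
contains elements of both `range r ∖ range (r ∘ f)` and `range s ∖ range (s ∘ g)`. -/
def FAP : Prop :=
  ∀ A B C : Bundled.{w} L.Structure, A ∈ K → B ∈ K → C ∈ K →
    ∀ (f : A ↪[L] B) (g : A ↪[L] C),
      ∃ D : Bundled.{w} L.Structure, D ∈ K ∧
        ∃ (r : B ↪[L] D) (s : C ↪[L] D),
          r.comp f = s.comp g ∧
          Set.range ⇑r ∩ Set.range ⇑s = Set.range ⇑(r.comp f) ∧
          ∀ {n : ℕ} (R : L.Relations n) (t : Fin n → D), RelMap R t →
            ¬ ((∃ i, t i ∈ Set.range ⇑r \ Set.range ⇑(r.comp f)) ∧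
               (∃ j, t j ∈ Set.range ⇑s \ Set.range ⇑(s.comp g)))

/-- The Substructure Free Amalgamation Property (SFAP). -/
def SFAP : Prop :=
  FAP K ∧
  ∀ A C : Bundled.{w} L.Structure, A ∈ K → C ∈ K →
  ∀ (iAC : A ↪[L] C) (v w : C), IsTwoPointExt iAC v w →
  ∀ B : Bundled.{w} L.Structure, B ∈ K → ∀ iAB : A ↪[L] B,
  -- σ : a quantifier-free 1-type over B realized in a member Bσ of K,
  -- with σ ↾ A = qftp(v / A)
  ∀ Bσ : Bundled.{w} L.Structure, Bσ ∈ K →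
    ∀ (jσ : B ↪[L] Bσ) (vσ : Bσ), IsOnePointExt jσ vσ →
      QF1Eq (jσ.comp iAB) vσ iAC v →
  -- τ : a quantifier-free 1-type over B realized in a member Bτ of K,
  -- with τ ↾ A = qftp(w / A)
  ∀ Bτ : Bundled.{w} L.Structure, Bτ ∈ K →
    ∀ (jτ : B ↪[L] Bτ) (wτ : Bτ), IsOnePointExt jτ wτ →
      QF1Eq (jτ.comp iAB) wτ iAC w →
  -- D extends B by one vertex v' with qftp(v'/B) = σ
  ∀ D : Bundled.{w} L.Structure, D ∈ K →
    ∀ (iBD : B ↪[L] D) (v' : D), IsOnePointExt iBD v' →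
      QF1Eq iBD v' jσ vσ →
  -- conclusion: E extends D by one vertex w' with qftp(w'/B) = τ,
  -- E ↾ (A ∪ {v', w'}) ≅ C, and E adds no other relations over D
  ∃ E : Bundled.{w} L.Structure, E ∈ K ∧
    ∃ (iDE : D ↪[L] E) (w' : E),
      IsOnePointExt iDE w' ∧
      QF1Eq (iDE.comp iBD) w' jτ wτ ∧
      QF2Eq ((iDE.comp iBD).comp iAB) (iDE v') w' iAC v w ∧
      (∀ {n : ℕ} (R : L.Relations n) (t : Fin n → E), RelMap R t →
        (∀ i, t i ∈ Set.range ⇑iDE) ∨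
        (∀ i, t i = w' ∨ t i ∈ Set.range ⇑(iDE.comp iBD)) ∨
        (∀ i, t i = w' ∨ t i = iDE v' ∨ t i ∈ Set.range ⇑((iDE.comp iBD).comp iAB)))

/-- The body of SDAP, for a given choice of witnesses `A'`, `C'` (with the connecting
embeddings): `C'` is a disjoint amalgam of `A'` and `C` over `A` extending `A'` by the two
vertices `iCC' v`, `iCC' w`, and any two 1-types over a structure `B ⊇ A'` extending the
types of these two vertices over `A'` can be realized consecutively yielding a copy of `C`
over `A`. -/
def SDAPWitness {A C : Bundled.{w} L.Structure} (iAC : A ↪[L] C) (v w : C)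
    (A' C' : Bundled.{w} L.Structure) (iAA' : A ↪[L] A') (iA'C' : A' ↪[L] C')
    (iCC' : C ↪[L] C') : Prop :=
  iA'C'.comp iAA' = iCC'.comp iAC ∧
  Set.range ⇑iA'C' ∩ Set.range ⇑iCC' = Set.range ⇑(iA'C'.comp iAA') ∧
  IsTwoPointExt iA'C' (iCC' v) (iCC' w) ∧
  ∀ B : Bundled.{w} L.Structure, B ∈ K → ∀ iA'B : A' ↪[L] B,
  ∀ Bσ : Bundled.{w} L.Structure, Bσ ∈ K →
    ∀ (jσ : B ↪[L] Bσ) (vσ : Bσ), IsOnePointExt jσ vσ →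
      QF1Eq (jσ.comp iA'B) vσ iA'C' (iCC' v) →
  ∀ Bτ : Bundled.{w} L.Structure, Bτ ∈ K →
    ∀ (jτ : B ↪[L] Bτ) (wτ : Bτ), IsOnePointExt jτ wτ →
      QF1Eq (jτ.comp iA'B) wτ iA'C' (iCC' w) →
  ∀ D : Bundled.{w} L.Structure, D ∈ K →
    ∀ (iBD : B ↪[L] D) (v'' : D), IsOnePointExt iBD v'' →
      QF1Eq iBD v'' jσ vσ →
  ∃ E : Bundled.{w} L.Structure, E ∈ K ∧
    ∃ (iDE : D ↪[L] E) (w'' : E),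
      IsOnePointExt iDE w'' ∧
      QF1Eq (iDE.comp iBD) w'' jτ wτ ∧
      QF2Eq (((iDE.comp iBD).comp iA'B).comp iAA') (iDE v'') w'' iAC v w

/-- The Substructure Disjoint Amalgamation Property (SDAP). -/
def SDAP : Prop :=
  DAP K ∧
  ∀ A C : Bundled.{w} L.Structure, A ∈ K → C ∈ K →
    ∀ (iAC : A ↪[L] C) (v w : C), IsTwoPointExt iAC v w →
      ∃ A' C' : Bundled.{w} L.Structure, A' ∈ K ∧ C' ∈ K ∧
        ∃ (iAA' : A ↪[L] A') (iA'C' : A' ↪[L] C') (iCC' : C ↪[L] C'),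
          SDAPWitness K iAC v w A' C' iAA' iA'C' iCC'

/-- A Fraïssé class: a nonempty class of finite structures, closed under isomorphism and
substructures (equivalently, under embeddability of finite structures), with the joint
embedding and amalgamation properties. -/
def IsFraisseClass : Prop :=
  K.Nonempty ∧
  (∀ M ∈ K, Finite M) ∧
  (∀ M N : Bundled.{w} L.Structure, Nonempty (M ≃[L] N) → (M ∈ K ↔ N ∈ K)) ∧
  (∀ M ∈ K, ∀ N : Bundled.{w} L.Structure, Nonempty (N ↪[L] M) → N ∈ K) ∧
  (∀ M ∈ K, ∀ N ∈ K, ∃ P ∈ K, Nonempty (M ↪[L] P) ∧ Nonempty (N ↪[L] P)) ∧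
  (∀ A B C : Bundled.{w} L.Structure, A ∈ K → B ∈ K → C ∈ K →
    ∀ (f : A ↪[L] B) (g : A ↪[L] C),
      ∃ D : Bundled.{w} L.Structure, D ∈ K ∧
        ∃ (r : B ↪[L] D) (s : C ↪[L] D), r.comp f = s.comp g)

/-- `M` is a Fraïssé limit of `K`: a countably infinite ultrahomogeneous structure whose age
(the class of finite structures embeddable in it) is `K`. -/
def IsFraisseLimitOf (M : Type w) [L.Structure M] : Prop :=
  Countable M ∧ Infinite M ∧ L.IsUltrahomogeneous M ∧
    ∀ N : Bundled.{w} L.Structure, N ∈ K ↔ (Finite N ∧ Nonempty (N ↪[L] M))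

end CDP

namespace CDP

section Aux

variable {L : FirstOrder.Language.{u, v}} {M : Type w} [L.Structure M]

/-! ### Types as orbits of automorphisms -/

/-- `x` and `y` have the same quantifier-free type over `S`, phrased through an automorphism of
`M` fixing `S` pointwise and sending `y` to `x`; in an ultrahomogeneous structure and for finite
`S` this is the usual notion. -/
def SameOrbit (L : FirstOrder.Language.{u, v}) {M : Type w} [L.Structure M]
    (S : Set M) (x y : M) : Prop :=
  ∃ θ : M ≃[L] M, (∀ s ∈ S, θ s = s) ∧ θ y = x

/-- In a relational language every subset carries a substructure. -/
def sub (L : FirstOrder.Language.{u, v}) [L.IsRelational] {M : Type w} [L.Structure M]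
    (S : Set M) : L.Substructure M where
  carrier := S
  fun_mem f := isEmptyElim f

/-- The substructure on `S`, bundled so that it can be a member of `K`. -/
abbrev bsub (L : FirstOrder.Language.{u, v}) [L.IsRelational] {M : Type w} [L.Structure M]
    (S : Set M) : Bundled.{w} L.Structure :=
  ⟨sub L S, inferInstance⟩

theorem SameOrbit.notMem {S : Set M} {x y : M} (h : SameOrbit L S x y) (hy : y ∉ S) : x ∉ S := by
  obtain ⟨θ, h1, rfl⟩ := h
  intro hx
  have := θ.injective (h1 _ hx)
  rw [this] at hx
  exact hy hx

theorem SameEmptyType.symm {x y : M} (h : SameEmptyType (L := L) x y) :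
    SameEmptyType (L := L) y x := fun R => (h R).symm

theorem SameEmptyType.trans {x y z : M} (h : SameEmptyType (L := L) x y)
    (h' : SameEmptyType (L := L) y z) : SameEmptyType (L := L) x z :=
  fun R => (h' R).trans (h R)

/-! ### Constructing self-embeddings -/

/-- A forth-only construction, with finite partial embeddings represented by automorphisms: if
every finite approximation satisfying `P` extends to one more point, then some self-embedding
satisfies `P` everywhere. -/
theorem exists_embedding_of_extension [Countable M] [Nonempty M] (P : M → M → Prop)
    (H : ∀ (φ : M ≃[L] M) (F : Set M), F.Finite → (∀ z ∈ F, P z (φ z)) → ∀ x ∉ F,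
      ∃ ψ : M ≃[L] M, (∀ z ∈ F, ψ z = φ z) ∧ P x (ψ x)) :
    ∃ f : M ↪[L] M, ∀ x, P x (f x) := by
  obtain ⟨e, he⟩ := exists_surjective_nat M
  let F : ℕ → Set M := fun n => e '' Set.Iio n
  have hF : ∀ n, (F n).Finite := fun n => (Set.finite_Iio n).image e
  let T : ℕ → Type w := fun n => {φ : M ≃[L] M // ∀ z ∈ F n, P z (φ z)}
  have step : ∀ n (φ : T n), ∃ ψ : T (n + 1), ∀ z ∈ F n, ψ.1 z = φ.1 z := by
    rintro n ⟨φ, hφ⟩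
    have hsucc : ∀ z ∈ F (n + 1), z ∈ F n ∨ z = e n := by
      rintro z ⟨i, hi, rfl⟩
      rcases Nat.lt_succ_iff_lt_or_eq.1 hi with h | h
      · exact Or.inl ⟨i, h, rfl⟩
      · exact Or.inr (by rw [h])
    by_cases hx : e n ∈ F n
    · refine ⟨⟨φ, fun z hz => ?_⟩, fun z _ => rfl⟩
      rcases hsucc z hz with h | rfl
      exacts [hφ z h, hφ _ hx]
    · obtain ⟨ψ, h1, h2⟩ := H φ (F n) (hF n) hφ (e n) hx
      refine ⟨⟨ψ, fun z hz => ?_⟩, h1⟩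
      rcases hsucc z hz with h | rfl
      · rw [h1 z h]; exact hφ z h
      · exact h2
  choose next hnext using step
  let φ : ∀ n, T n := fun n => Nat.rec (motive := T)
    ⟨FirstOrder.Language.Equiv.refl L M, by rintro z ⟨i, hi, -⟩; exact absurd hi (Nat.not_lt_zero i)⟩
    (fun n p => next n p) n
  have hφ : ∀ n, ∀ z ∈ F n, (φ (n + 1)).1 z = (φ n).1 z := fun n => hnext n (φ n)
  have hmono : ∀ m n, m ≤ n → F m ⊆ F n := fun m n h =>
    Set.image_mono (Set.Iio_subset_Iio h)
  have hstab : ∀ m n, m ≤ n → ∀ z ∈ F m, (φ n).1 z = (φ m).1 z := by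
    intro m n h
    induction n, h using Nat.le_induction with
    | base => exact fun _ _ => rfl
    | succ n h ih => exact fun z hz => (hφ n z (hmono m n h hz)).trans (ih z hz)
  choose idx hidx using he
  have hmem : ∀ x, x ∈ F (idx x + 1) := fun x => ⟨idx x, Nat.lt_succ_self _, hidx x⟩
  let f : M → M := fun x => (φ (idx x + 1)).1 x
  have hf : ∀ n x, idx x + 1 ≤ n → f x = (φ n).1 x := fun n x h =>
    (hstab _ n h x (hmem x)).symm
  refine ⟨⟨⟨f, ?_⟩, ?_, ?_⟩, fun x => (φ (idx x + 1)).2 x (hmem x)⟩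
  · intro x y hxy
    rw [hf (max (idx x + 1) (idx y + 1)) x (le_max_left _ _),
      hf (max (idx x + 1) (idx y + 1)) y (le_max_right _ _)] at hxy
    exact (φ _).1.injective hxy
  · intro n g t
    let N := Finset.univ.sup (fun i => idx (t i) + 1) + (idx (funMap g t) + 1)
    have h1 : f ∘ t = (φ N).1 ∘ t := funext fun i => hf N (t i)
      ((Finset.le_sup (f := fun i => idx (t i) + 1) (Finset.mem_univ i)).trans
        (Nat.le_add_right _ _))
    change f (funMap g t) = funMap g (f ∘ t)
    rw [h1, hf N _ (Nat.le_add_left _ _)]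
    exact (φ N).1.map_fun g t
  · intro n R t
    let N := Finset.univ.sup (fun i => idx (t i) + 1)
    have h1 : f ∘ t = (φ N).1 ∘ t := funext fun i => hf N (t i)
      (Finset.le_sup (f := fun i => idx (t i) + 1) (Finset.mem_univ i))
    change RelMap R (f ∘ t) ↔ RelMap R t
    rw [h1]
    exact (φ N).1.map_rel R t

variable [L.IsRelational]

/-! ### Amalgamation inside the limit -/

theorem exists_automorphism (hU : L.IsUltrahomogeneous M) {S : Set M} (hS : S.Finite)
    (f : sub L S ↪[L] M) : ∃ θ : M ≃[L] M, ∀ s : sub L S, θ s = f s := by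
  have hfg : (sub L S).FG := by
    refine Substructure.fg_def.2 ⟨S, hS, ?_⟩
    exact SetLike.coe_injective (Substructure.closure_eq_of_isRelational L S)
  obtain ⟨g, hg⟩ := hU _ hfg f
  exact ⟨g, fun s => by rw [hg]; rfl⟩

/-- A relation-preserving exchange of `y` for `w` over a finite set `G` is induced by an
automorphism. -/
theorem sameOrbit_of_relMap (hU : L.IsUltrahomogeneous M) {G : Set M} (hG : G.Finite) {y w : M}
    (hy : y ∉ G) (hw : w ∉ G) (g : M → M) (hgy : g y = w) (hgG : ∀ z ∈ G, g z = z)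
    (h : ∀ {n : ℕ} (R : L.Relations n) (t : Fin n → M), (∀ i, t i = y ∨ t i ∈ G) →
      (RelMap R (fun i => g (t i)) ↔ RelMap R t)) : SameOrbit L G w y := by
  let f : sub L (insert y G) ↪[L] M :=
    { toFun := fun z => g z
      inj' := by
        rintro ⟨x, hx⟩ ⟨z, hz⟩ hxz
        refine Subtype.ext ?_
        change g x = g z at hxz
        change x = z
        rcases hx with rfl | hx <;> rcases hz with rfl | hz
        · rfl
        · rw [hgy, hgG z hz] at hxz
          exact absurd (hxz ▸ hz) hw
        · rw [hgy, hgG x hx] at hxz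
          exact absurd (hxz ▸ hx) hw
        · rwa [hgG x hx, hgG z hz] at hxz
      map_fun' := fun f => isEmptyElim f
      map_rel' := fun R t => h R (fun i => (t i : M)) (fun i => (t i).2) }
  obtain ⟨θ, hθ⟩ := exists_automorphism hU (hG.insert y) f
  refine ⟨θ, fun s hs => ?_, ?_⟩
  · exact (hθ ⟨s, Or.inr hs⟩).trans (hgG s hs)
  · exact (hθ ⟨y, Or.inl rfl⟩).trans hgy

variable {K : Set (Bundled.{w} L.Structure)}

theorem bsub_mem (hM : IsFraisseLimitOf K M) {S : Set M} (hS : S.Finite) : bsub L S ∈ K :=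
  (hM.2.2.2 _).2 ⟨hS.to_subtype, ⟨(sub L S).subtype⟩⟩

/-- The extension property of the limit. -/
theorem exists_realization (hM : IsFraisseLimitOf K M) {S : Set M} (hS : S.Finite)
    {E : Bundled.{w} L.Structure} (hE : E ∈ K) (i : bsub L S ↪[L] E) :
    ∃ h : E ↪[L] M, ∀ s, h (i s) = s.1 := by
  obtain ⟨-, ⟨h⟩⟩ := (hM.2.2.2 E).1 hE
  obtain ⟨θ, hθ⟩ := exists_automorphism hM.2.2.1 hS (h.comp i)
  refine ⟨θ.symm.toEmbedding.comp h, fun s => ?_⟩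
  have : θ s.1 = h (i s) := hθ s
  change θ.symm (h (i s)) = s.1
  rw [← this, θ.symm_apply_apply]

/-- The inclusion of the substructure on `S` into the one on `T`. -/
abbrev incl {S T : Set M} (h : S ⊆ T) : bsub L S ↪[L] bsub L T :=
  Substructure.inclusion (S := sub L S) (T := sub L T) h

/-- Disjoint amalgamation in the limit: a type over a finite set has realizations outside any
finite set. -/
theorem exists_sameOrbit_notMem (hM : IsFraisseLimitOf K M) (hF : FAP K) {S T : Set M}
    (hS : S.Finite) (hT : T.Finite) {y : M} (hy : y ∉ S) :
    ∃ w, w ∉ T ∧ SameOrbit L S w y := by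
  obtain ⟨D, hD, r, s, hrs, hran, -⟩ := hF (bsub L S) (bsub L (S ∪ T)) (bsub L (insert y S))
    (bsub_mem hM hS) (bsub_mem hM (hS.union hT)) (bsub_mem hM (hS.insert y))
    (incl Set.subset_union_left) (incl (Set.subset_insert y S))
  obtain ⟨h, hh⟩ := exists_realization hM (hS.union hT) hD r
  obtain ⟨θ, hθ⟩ := exists_automorphism hM.2.2.1 (hS.insert y) (h.comp s)
  refine ⟨h (s ⟨y, Or.inl rfl⟩), fun hw => ?_, θ, fun z hz => ?_, hθ ⟨y, Or.inl rfl⟩⟩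
  · have h1 : s ⟨y, Or.inl rfl⟩ = r ⟨_, Or.inr hw⟩ := h.injective (hh ⟨_, Or.inr hw⟩).symm
    have h2 : s ⟨y, Or.inl rfl⟩ ∈ Set.range r ∩ Set.range s := ⟨⟨_, h1.symm⟩, ⟨_, rfl⟩⟩
    rw [hran, hrs] at h2
    obtain ⟨z, hz⟩ := h2
    have h3 : z.1 = y := congrArg Subtype.val (s.injective hz)
    exact hy (h3 ▸ z.2)
  · have h1 := congrArg (fun k => k ⟨z, hz⟩) hrs
    have h2 : r ⟨z, Or.inl hz⟩ = s ⟨z, Or.inr hz⟩ := h1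
    calc θ z = h (s ⟨z, Or.inr hz⟩) := hθ ⟨z, Or.inr hz⟩
      _ = z := by rw [← h2]; exact hh ⟨z, Or.inl hz⟩

/-- Types over disjoint finite sets which agree over the empty set are realized simultaneously.
By induction on `B`: the new point `v` of `B` plays the first vertex in SFAP, over the base
`A ∪ B`, and a realization over the smaller sets supplies the type of the second vertex. -/
theorem exists_sameOrbit_both (hM : IsFraisseLimitOf K M) (hSFAP : SFAP K) {A B : Set M}
    (hA : A.Finite) (hB : B.Finite) (hAB : Disjoint A B) {u y : M} (hu : u ∉ A) (hy : y ∉ B)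
    (huy : SameEmptyType (L := L) u y) :
    ∃ w, SameOrbit L A w u ∧ SameOrbit L B w y := by
  classical
  induction B, hB using Set.Finite.induction_on with
  | empty =>
    refine ⟨u, ⟨FirstOrder.Language.Equiv.refl L M, fun _ _ => rfl, rfl⟩, ?_⟩
    refine sameOrbit_of_relMap hM.2.2.1 Set.finite_empty (by simp) (by simp) (fun _ => u) rfl
      (by simp) ?_
    intro n R t ht
    have : t = fun _ => y := funext fun i => by simpa using ht i
    rw [this]
    exact (huy R).symm
  | @insert v B hvB hB ih =>
    have hAB' : Disjoint A B := hAB.mono_right (Set.subset_insert v B)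
    have hvA : v ∉ A := fun h => hAB.le_bot ⟨h, Or.inl rfl⟩
    have hyv : v ≠ y := fun h => hy (Or.inl h.symm)
    have hyB : y ∉ B := fun h => hy (Or.inr h)
    obtain ⟨w₀, hwA, hwB⟩ := ih hAB' hyB
    have hw₀A := hwA.notMem hu
    have hw₀B := hwB.notMem hyB
    have hfin : (A ∪ B).Finite := hA.union hB
    have hv : v ∉ A ∪ B := fun h => h.elim hvA hvB
    have hw₀ : w₀ ∉ A ∪ B := fun h => h.elim hw₀A hw₀B
    have hone : ∀ z (hz : z ∉ A ∪ B), IsOnePointExt (L := L)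
        (incl (L := L) (Set.subset_insert z (A ∪ B))) ⟨z, Or.inl rfl⟩ := by
      intro z hz
      refine ⟨?_, ?_⟩
      · rintro ⟨x, hx⟩
        have hxz : x.1 = z := congrArg Subtype.val hx
        exact hz (hxz ▸ x.2)
      · rintro ⟨x, rfl | hx⟩
        · exact Or.inl rfl
        · exact Or.inr ⟨⟨x, hx⟩, rfl⟩
    obtain ⟨E, hE, i, w', hw', h1, h2, -⟩ := hSFAP.2 (bsub L B) (bsub L (insert v (insert y B)))
      (bsub_mem hM hB) (bsub_mem hM ((hB.insert y).insert v))
      (incl ((Set.subset_insert y B).trans (Set.subset_insert v _)))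
      ⟨v, Or.inl rfl⟩ ⟨y, Or.inr (Or.inl rfl)⟩
      ⟨fun h => hyv (congrArg Subtype.val h),
        by
          rintro ⟨x, hx⟩
          have hx' : x.1 = v := congrArg Subtype.val hx
          exact hvB (hx' ▸ x.2),
        by
          rintro ⟨x, hx⟩
          have hx' : x.1 = y := congrArg Subtype.val hx
          exact hyB (hx' ▸ x.2),
        by
          rintro ⟨x, rfl | rfl | hx⟩
          · exact Or.inl rfl
          · exact Or.inr (Or.inl rfl)
          · exact Or.inr (Or.inr ⟨⟨x, hx⟩, rfl⟩)⟩
      (bsub L (A ∪ B)) (bsub_mem hM hfin) (incl Set.subset_union_right)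
      (bsub L (insert v (A ∪ B))) (bsub_mem hM (hfin.insert v))
      (incl (Set.subset_insert v _)) ⟨v, Or.inl rfl⟩ (hone v hv)
      (by
        intro n R t
        change RelMap R (fun k => (_ : M)) ↔ RelMap R (fun k => (_ : M))
        refine iff_of_eq (congrArg _ (funext fun k => ?_))
        beta_reduce
        cases t k <;> rfl)
      (bsub L (insert w₀ (A ∪ B))) (bsub_mem hM (hfin.insert w₀))
      (incl (Set.subset_insert w₀ _)) ⟨w₀, Or.inl rfl⟩ (hone w₀ hw₀)
      (by
        intro n R t
        obtain ⟨θ, hθ, hθy⟩ := hwB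
        change RelMap R (fun k => (_ : M)) ↔ RelMap R (fun k => (_ : M))
        refine Iff.trans ?_ (θ.map_rel R _)
        refine iff_of_eq (congrArg _ (funext fun k => ?_))
        simp only [Function.comp]
        cases h : t k with
        | none => exact hθy.symm
        | some b => exact (hθ b.1 b.2).symm)
      (bsub L (insert v (A ∪ B))) (bsub_mem hM (hfin.insert v))
      (incl (Set.subset_insert v _)) ⟨v, Or.inl rfl⟩ (hone v hv)
      (fun R t => Iff.rfl)
    obtain ⟨h, hh⟩ := exists_realization hM (hfin.insert v) hE i
    have hwn : h w' ∉ insert v (A ∪ B) := by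
      intro hmem
      have := h.injective (hh ⟨_, hmem⟩)
      exact hw'.1 ⟨_, this⟩
    have hwAB : h w' ∉ A ∪ B := fun h => hwn (Or.inr h)
    have hwv : h w' ≠ v := fun h => hwn (Or.inl h)
    have o1 : SameOrbit L (A ∪ B) (h w') w₀ := by
      refine sameOrbit_of_relMap hM.2.2.1 hfin hw₀ hwAB (fun z => if z = w₀ then h w' else z)
        (if_pos rfl) (fun z hz => if_neg fun (e : z = w₀) => hw₀ (e ▸ hz)) ?_
      intro n R t ht
      let t' : Fin n → Option (bsub L (A ∪ B)) := fun k =>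
        if hk : t k ∈ A ∪ B then some ⟨t k, hk⟩ else none
      have := h1 R t'
      rw [← h.map_rel R, ← (sub L (insert w₀ (A ∪ B))).subtype.map_rel R] at this
      convert this using 2
      · funext k
        by_cases hk : t k ∈ A ∪ B
        · have : t k ≠ w₀ := fun h => hw₀ (h ▸ hk)
          simp only [Function.comp, t', dif_pos hk, if_neg this]
          exact (hh ⟨t k, Or.inr hk⟩).symm
        · have : t k = w₀ := (ht k).resolve_right hk
          simp only [Function.comp, t', dif_neg hk, if_pos this]
          rfl
      · funext k
        by_cases hk : t k ∈ A ∪ B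
        · simp only [Function.comp, t', dif_pos hk]
          rfl
        · simp only [Function.comp, t', dif_neg hk]
          exact (ht k).resolve_right hk
    have o2 : SameOrbit L (insert v B) (h w') y := by
      refine sameOrbit_of_relMap hM.2.2.1 (hB.insert v) hy
        (fun h => h.elim hwv fun h => hwAB (Or.inr h))
        (fun z => if z = y then h w' else z)
        (if_pos rfl) (fun z hz => if_neg fun (e : z = y) => hy (e ▸ hz)) ?_
      intro n R t ht
      let t' : Fin n → bsub L B ⊕ Fin 2 := fun k =>
        if hk : t k ∈ B then Sum.inl ⟨t k, hk⟩ else if t k = v then Sum.inr 0 else Sum.inr 1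
      have := h2 R t'
      rw [← h.map_rel R, ← (sub L (insert v (insert y B))).subtype.map_rel R] at this
      convert this using 2
      · funext k
        by_cases hk : t k ∈ B
        · have : t k ≠ y := fun h => hyB (h ▸ hk)
          simp only [Function.comp, t', dif_pos hk, if_neg this]
          exact (hh ⟨t k, Or.inr (Or.inr hk)⟩).symm
        · by_cases hkv : t k = v
          · have : t k ≠ y := fun h => hyv (hkv.symm.trans h)
            simp only [Function.comp, t', dif_neg hk, if_pos hkv, if_neg this]
            exact hkv.trans (hh ⟨v, Or.inl rfl⟩).symm
          · have : t k = y := (ht k).resolve_right fun h => h.elim hkv hk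
            simp only [Function.comp, t', dif_neg hk, if_neg hkv, if_pos this]
            rfl
      · funext k
        by_cases hk : t k ∈ B
        · simp only [Function.comp, t', dif_pos hk]
          rfl
        · by_cases hkv : t k = v
          · simp only [Function.comp, t', dif_neg hk, if_pos hkv]
            exact hkv
          · simp only [Function.comp, t', dif_neg hk, if_neg hkv]
            exact (ht k).resolve_right fun h => h.elim hkv hk
    obtain ⟨θ, hθ, hθw⟩ := o1
    obtain ⟨η, hη, hηu⟩ := hwA
    refine ⟨h w', ⟨θ.comp η, fun s hs => ?_, ?_⟩, o2⟩
    · change θ (η s) = s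
      rw [hη s hs, hθ s (Or.inl hs)]
    · change θ (η u) = h w'
      rw [hηu, hθw]

/-! ### Indivisibility -/

/-- The two-colour case. If no self-embedding sends the type of `a` into `Red`, the greedy
construction gets stuck at a type over a finite set `A` with no realization in `Red`, and `M`
embeds with every point of the type of `a` realizing that one type over `A`. -/
theorem exists_embedding_red_or_not (hM : IsFraisseLimitOf K M) (hSFAP : SFAP K)
    (Red : M → Prop) (a : M) :
    (∃ f : M ↪[L] M, ∀ x, SameEmptyType (L := L) a x → Red (f x)) ∨
    (∃ f : M ↪[L] M, ∀ x, SameEmptyType (L := L) a x → ¬ Red (f x)) := by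
  have : Countable M := hM.1
  have : Nonempty M := ⟨a⟩
  by_cases H : ∀ (φ : M ≃[L] M) (F : Set M), F.Finite →
      (∀ z ∈ F, SameEmptyType (L := L) a z → Red (φ z)) → ∀ x ∉ F,
      ∃ ψ : M ≃[L] M, (∀ z ∈ F, ψ z = φ z) ∧ (SameEmptyType (L := L) a x → Red (ψ x))
  · exact Or.inl (exists_embedding_of_extension
      (fun x y => SameEmptyType (L := L) a x → Red y) H)
  right
  push Not at H
  obtain ⟨φ, F, hF, -, x₀, hx₀, hstuck⟩ := H
  have hx₀a : SameEmptyType (L := L) a x₀ := (hstuck φ fun _ _ => rfl).1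
  have hA : (φ '' F).Finite := hF.image φ
  have hu : φ x₀ ∉ φ '' F := by
    rintro ⟨z, hz, hzx⟩
    exact hx₀ (φ.injective hzx ▸ hz)
  have hblue : ∀ w, SameOrbit L (φ '' F) w (φ x₀) → ¬ Red w := by
    rintro w ⟨θ, hθ, rfl⟩
    exact (hstuck (θ.comp φ) fun z hz => hθ _ ⟨z, hz, rfl⟩).2
  have hinv : ∀ (ψ : M ≃[L] M) x, SameEmptyType (L := L) x (ψ x) := by
    intro ψ x n R
    exact ψ.map_rel R (fun _ => x)
  obtain ⟨f, hf⟩ := exists_embedding_of_extension (L := L) (fun x y : M => y ∉ φ '' F ∧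
      (SameEmptyType (L := L) a x → SameOrbit L (φ '' F) y (φ x₀))) (by
    intro ψ G hG hPG x hx
    have hB : (ψ '' G).Finite := hG.image ψ
    have hy : ψ x ∉ ψ '' G := by
      rintro ⟨z, hz, hzx⟩
      exact hx (ψ.injective hzx ▸ hz)
    by_cases hxa : SameEmptyType (L := L) a x
    · have hdisj : Disjoint (φ '' F) (ψ '' G) := by
        rw [Set.disjoint_left]
        rintro _ h ⟨z, hz, rfl⟩
        exact (hPG z hz).1 h
      obtain ⟨w, hw1, θ, hθ, hθw⟩ := exists_sameOrbit_both hM hSFAP hA hB hdisj hu hy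
        (SameEmptyType.trans (SameEmptyType.trans
          (SameEmptyType.trans (SameEmptyType.symm (hinv φ x₀)) (SameEmptyType.symm hx₀a)) hxa)
          (hinv ψ x))
      refine ⟨θ.comp ψ, fun z hz => hθ _ ⟨z, hz, rfl⟩, ?_⟩
      have : (θ.comp ψ) x = w := hθw
      rw [this]
      exact ⟨hw1.notMem hu, fun _ => hw1⟩
    · obtain ⟨w, hw1, θ, hθ, hθw⟩ := exists_sameOrbit_notMem hM hSFAP.1 hB hA hy
      refine ⟨θ.comp ψ, fun z hz => hθ _ ⟨z, hz, rfl⟩, ?_⟩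
      have : (θ.comp ψ) x = w := hθw
      rw [this]
      exact ⟨hw1, fun h => by contradiction⟩)
  exact ⟨f, fun x hx => hblue _ ((hf x).2 hx)⟩

theorem exists_embedding_const (hM : IsFraisseLimitOf K M) (hSFAP : SFAP K) (a : M) (k : ℕ)
    (c : M → ℕ) (hc : ∀ x, SameEmptyType (L := L) a x → c x < k) :
    ∃ f : M ↪[L] M, ∃ i : ℕ, ∀ x, SameEmptyType (L := L) a x → c (f x) = i := by
  induction k generalizing c with
  | zero => exact absurd (hc a fun _ => Iff.rfl) (Nat.not_lt_zero _)
  | succ k ih =>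
    rcases exists_embedding_red_or_not hM hSFAP (fun x => c x = k) a with ⟨f, hf⟩ | ⟨f, hf⟩
    · exact ⟨f, k, hf⟩
    · obtain ⟨g, i, hg⟩ := ih (c ∘ f) fun x hx => by
        have : SameEmptyType (L := L) a (f x) := hx.trans fun R => f.map_rel R (fun _ => x)
        have h1 := hc _ this
        have h2 := hf x hx
        simp only [Function.comp]
        omega
      exact ⟨f.comp g, i, hg⟩

end Aux

end CDP

/-- Every Fraïssé limit of a Fraïssé class in a finite relational language
(with at least one symbol of arity ≥ 2, relations holding only on tuples of distinct
elements) satisfying SFAP is indivisible. -/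
theorem sfap_implies_indivisible
    (L : FirstOrder.Language.{u, v}) [L.IsRelational]
    (hfin : Finite (Σ n, L.Relations n))
    (harity : ∃ n, 2 ≤ n ∧ Nonempty (L.Relations n))
    (K : Set (CategoryTheory.Bundled.{w} L.Structure))
    (hK : CDP.IsFraisseClass K)
    (hnoloops : ∀ M ∈ K, CDP.NoLoops (L := L) M)
    (hSFAP : CDP.SFAP K)
    (M : Type w) [L.Structure M]
    (hM : CDP.IsFraisseLimitOf K M) :
    ∀ k : ℕ, 1 ≤ k → ∀ c : M → Fin k, ∀ a : M,
      ∃ f : M ↪[L] M, ∃ i : Fin k,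
        ∀ x : M, CDP.SameEmptyType (L := L) a x → c (f x) = i := by
  intro k _ c a
  obtain ⟨f, i, hf⟩ := CDP.exists_embedding_const hM hSFAP a k (fun x => (c x : ℕ))
    fun x _ => (c x).2
  exact ⟨f, c (f a), fun x hx => Fin.ext ((hf x hx).trans (hf a fun _ => Iff.rfl).symm)⟩
end

section
/- Let L₀ and L₁ be finite relational languages with no symbols in common, and let K₀ and K₁ be Fraïssé classes of finite L₀- and L₁-structures, each satisfying the Substructure Free Amalgamation Property (SFAP). Then the free superposition of K₀ and K₁ satisfies SFAP. -/
/-!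
Both halves of SFAP ask for a structure built on a set that the input determines: the union of `B`
and `C` over `A` for free amalgamation, and `D` with one extra point for the one-point extension.
SFAP of `K₀` and of `K₁`, applied to the reducts, gives two solutions `M₀` and `M₁`, and the
prescribed set `X` injects into both of them compatibly with the given embeddings. Let the
`L₀`-relations of `X` be those pulled back from `M₀` and the `L₁`-relations those pulled back from
`M₁`. The reducts of `X` then embed in `M₀` and `M₁`, so heredity puts `X` in the free
superposition (`glue_mem`), and since every relation symbol of `L₀.sum L₁` comes from exactly one of
the two languages, each requirement on relations of `X` reduces to the same requirement on `M₀`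
or on `M₁`.
-/


open FirstOrder FirstOrder.Language FirstOrder.Language.Structure CategoryTheory

universe u v w

namespace CDP

/-- The free superposition of classes `K₀`, `K₁` of structures in the disjoint languages
`L₀`, `L₁`: the class of all finite `(L₀ ∪ L₁)`-structures whose `Lᵢ`-reduct lies in `Kᵢ`
for each `i < 2`. -/
def freeSuperposition {L₀ : FirstOrder.Language.{u, v}} {L₁ : FirstOrder.Language.{u, v}}
    (K₀ : Set (CategoryTheory.Bundled.{w} L₀.Structure))
    (K₁ : Set (CategoryTheory.Bundled.{w} L₁.Structure)) :
    Set (CategoryTheory.Bundled.{w} (L₀.sum L₁).Structure) :=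
  { N | (⟨N, (FirstOrder.Language.LHom.sumInl : L₀ →ᴸ L₀.sum L₁).reduct N⟩ :
          CategoryTheory.Bundled.{w} L₀.Structure) ∈ K₀ ∧
        (⟨N, (FirstOrder.Language.LHom.sumInr : L₁ →ᴸ L₀.sum L₁).reduct N⟩ :
          CategoryTheory.Bundled.{w} L₁.Structure) ∈ K₁ }

end CDP

namespace CDP

/-! ### Reducts -/

section Reduct

variable {L L' : FirstOrder.Language.{u, v}} (φ : L →ᴸ L')

/-- The reduct of a bundled structure along a language map. -/
abbrev red (N : Bundled.{w} L'.Structure) : Bundled.{w} L.Structure := ⟨N, φ.reduct N⟩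

/-- An embedding, viewed as an embedding of reducts. -/
def redEmb {M N : Bundled.{w} L'.Structure} (f : M ↪[L'] N) : red φ M ↪[L] red φ N where
  toFun := f
  inj' := f.injective
  map_fun' F t := f.map_fun (φ.onFunction F) t
  map_rel' R t := f.map_rel (φ.onRelation R) t

lemma QF1Eq.red {A D E : Bundled.{w} L'.Structure} {f : A ↪[L'] D} {v : D} {g : A ↪[L'] E} {u : E}
    (h : QF1Eq f v g u) :
    QF1Eq (A := CDP.red φ A) (D := CDP.red φ D) (E := CDP.red φ E)
      (redEmb φ f) v (redEmb φ g) u :=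
  fun R t => h (φ.onRelation R) t

end Reduct

/-! ### Gluing an `L₀`-structure and an `L₁`-structure -/

section Glue

variable {L₀ L₁ : FirstOrder.Language.{u, v}} [L₀.IsRelational] [L₁.IsRelational]

/-- The `(L₀ ∪ L₁)`-structure on `X` whose `Lᵢ`-relations are pulled back along `eᵢ : X → Mᵢ`. -/
def glue {X : Type w} {M₀ : Bundled.{w} L₀.Structure} {M₁ : Bundled.{w} L₁.Structure}
    (e₀ : X → M₀) (e₁ : X → M₁) : Bundled.{w} (L₀.sum L₁).Structure :=
  ⟨X, { funMap := fun F => isEmptyElim F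
        RelMap := fun R t =>
          Sum.elim (fun R₀ => RelMap R₀ (fun i => e₀ (t i)))
            (fun R₁ => RelMap R₁ (fun i => e₁ (t i))) R }⟩

variable {X : Type w} {M₀ : Bundled.{w} L₀.Structure} {M₁ : Bundled.{w} L₁.Structure}
  {e₀ : X → M₀} {e₁ : X → M₁}

/-- The glued structure lies in the free superposition, as its reducts embed in the `Mᵢ`. -/
lemma glue_mem {K₀ : Set (Bundled.{w} L₀.Structure)} {K₁ : Set (Bundled.{w} L₁.Structure)}
    (hK₀ : IsFraisseClass K₀) (hK₁ : IsFraisseClass K₁) (h₀ : M₀ ∈ K₀) (h₁ : M₁ ∈ K₁)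
    (he₀ : Function.Injective e₀) (he₁ : Function.Injective e₁) :
    glue e₀ e₁ ∈ freeSuperposition K₀ K₁ :=
  ⟨hK₀.2.2.2.1 M₀ h₀ (red LHom.sumInl (glue e₀ e₁))
    ⟨{ toFun := e₀
       inj' := he₀
       map_fun' := fun F => isEmptyElim F
       map_rel' := fun _ _ => Iff.rfl }⟩,
   hK₁.2.2.2.1 M₁ h₁ (red LHom.sumInr (glue e₀ e₁))
    ⟨{ toFun := e₁
       inj' := he₁
       map_fun' := fun F => isEmptyElim F
       map_rel' := fun _ _ => Iff.rfl }⟩⟩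

/-- A map into the glued structure is an embedding once its composites with `e₀` and `e₁` are
embeddings of the reducts. -/
def glueEmb {B : Bundled.{w} (L₀.sum L₁).Structure} (r : B → X)
    (r₀ : red LHom.sumInl B ↪[L₀] M₀) (r₁ : red LHom.sumInr B ↪[L₁] M₁)
    (h₀ : ∀ b, e₀ (r b) = r₀ b) (h₁ : ∀ b, e₁ (r b) = r₁ b) : B ↪[L₀.sum L₁] glue e₀ e₁ where
  toFun := r
  inj' := fun a b hab => r₀.injective (by rw [← h₀, ← h₀, hab])
  map_fun' F := isEmptyElim F
  map_rel' := by
    rintro n (R | R) t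
    · refine Iff.trans (iff_of_eq ?_) (r₀.map_rel R t)
      exact congrArg (RelMap R) (funext fun i => h₀ (t i))
    · refine Iff.trans (iff_of_eq ?_) (r₁.map_rel R t)
      exact congrArg (RelMap R) (funext fun i => h₁ (t i))

end Glue

/-! ### Free amalgamation over a union -/

section Amalgam

/-- The map out of the union of `B` and `C` over `A` that is induced by maps on `B` and on `C`. -/
def unionMap {A B C M : Type*} {g : A → C} (r : B → M) (s : C → M) :
    B ⊕ {c : C // c ∉ Set.range g} → M :=
  Sum.elim r (fun c => s c)

lemma unionMap_injective {A B C M : Type*} {f : A → B} {g : A → C} {r : B → M} {s : C → M}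
    (hr : Function.Injective r) (hs : Function.Injective s) (h : ∀ a, r (f a) = s (g a))
    (hd : Set.range r ∩ Set.range s ⊆ Set.range (r ∘ f)) :
    Function.Injective (unionMap (g := g) r s) := by
  have key : ∀ (b : B) (c : {c : C // c ∉ Set.range g}), r b ≠ s c := by
    rintro b ⟨c, hc⟩ hbc
    obtain ⟨a, ha⟩ := hd ⟨⟨b, rfl⟩, ⟨c, hbc.symm⟩⟩
    exact hc ⟨a, hs ((h a).symm.trans (ha.trans hbc))⟩
  rintro (b | c) (b' | c') hbc
  · exact congrArg Sum.inl (hr hbc)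
  · exact (key b c' hbc).elim
  · exact (key b' c hbc.symm).elim
  · exact congrArg Sum.inr (Subtype.ext (hs hbc))

open Classical in
/-- The inclusion of `C` in the union of `B` and `C` over `A`. -/
noncomputable def unionInr {A B C : Type*} (f : A → B) (g : A → C) (c : C) :
    B ⊕ {c : C // c ∉ Set.range g} :=
  if h : c ∈ Set.range g then Sum.inl (f h.choose) else Sum.inr ⟨c, h⟩

lemma unionMap_unionInr {A B C M : Type*} {f : A → B} {g : A → C} {r : B → M} {s : C → M}
    (h : ∀ a, r (f a) = s (g a)) (c : C) : unionMap r s (unionInr f g c) = s c := by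
  unfold unionInr
  split_ifs with hc
  · exact (h _).trans (congrArg s hc.choose_spec)
  · rfl

lemma unionInr_of_range {A B C : Type*} {f : A → B} {g : A → C} (hg : Function.Injective g)
    (a : A) : unionInr f g (g a) = Sum.inl (f a) := by
  have hc : g a ∈ Set.range g := ⟨a, rfl⟩
  rw [unionInr, dif_pos hc, hg hc.choose_spec]

variable {L₀ L₁ : FirstOrder.Language.{u, v}} [L₀.IsRelational] [L₁.IsRelational]

theorem freeSuperposition_fap
    {K₀ : Set (Bundled.{w} L₀.Structure)} {K₁ : Set (Bundled.{w} L₁.Structure)}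
    (hK₀ : IsFraisseClass K₀) (hK₁ : IsFraisseClass K₁) (h₀ : FAP K₀) (h₁ : FAP K₁) :
    FAP (freeSuperposition K₀ K₁) := by
  intro A B C hA hB hC f g
  obtain ⟨D₀, hD₀, r₀, s₀, hc₀, hd₀, hf₀⟩ :=
    h₀ _ _ _ hA.1 hB.1 hC.1 (redEmb LHom.sumInl f) (redEmb LHom.sumInl g)
  obtain ⟨D₁, hD₁, r₁, s₁, hc₁, hd₁, hf₁⟩ :=
    h₁ _ _ _ hA.2 hB.2 hC.2 (redEmb LHom.sumInr f) (redEmb LHom.sumInr g)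
  have c₀ : ∀ a : A, r₀ (f a) = s₀ (g a) := fun a => DFunLike.congr_fun hc₀ a
  have c₁ : ∀ a : A, r₁ (f a) = s₁ (g a) := fun a => DFunLike.congr_fun hc₁ a
  let e₀ : B ⊕ {c : C // c ∉ Set.range g} → D₀ := unionMap r₀ s₀
  let e₁ : B ⊕ {c : C // c ∉ Set.range g} → D₁ := unionMap r₁ s₁
  have he₀ : Function.Injective e₀ :=
    unionMap_injective (f := f) r₀.injective s₀.injective c₀ hd₀.subset
  have he₁ : Function.Injective e₁ :=
    unionMap_injective (f := f) r₁.injective s₁.injective c₁ hd₁.subset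
  have hs₀ : ∀ c, e₀ (unionInr f g c) = s₀ c := unionMap_unionInr c₀
  have hs₁ : ∀ c, e₁ (unionInr f g c) = s₁ c := unionMap_unionInr c₁
  have hrs : ∀ a, unionInr f g (g a) = Sum.inl (f a) := unionInr_of_range g.injective
  refine ⟨glue e₀ e₁, glue_mem hK₀ hK₁ hD₀ hD₁ he₀ he₁,
    glueEmb Sum.inl r₀ r₁ (fun _ => rfl) (fun _ => rfl),
    glueEmb (unionInr f g) s₀ s₁ hs₀ hs₁, ?_, ?_, ?_⟩
  · ext a
    exact (hrs a).symm
  · apply Set.Subset.antisymm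
    · rintro _ ⟨⟨b, rfl⟩, ⟨c, hc⟩⟩
      have hc' : unionInr f g c = Sum.inl b := hc
      obtain ⟨a, ha⟩ := hd₀.subset
        (⟨⟨b, rfl⟩, ⟨c, by rw [← hs₀, hc']; rfl⟩⟩ : r₀ b ∈ Set.range r₀ ∩ Set.range s₀)
      exact ⟨a, congrArg Sum.inl (r₀.injective ha)⟩
    · rintro _ ⟨a, rfl⟩
      exact ⟨⟨f a, rfl⟩, ⟨g a, hrs a⟩⟩
  · rintro n (R | R) t hR ⟨⟨i, ⟨b, hb⟩, hi⟩, ⟨j, ⟨c, hc⟩, hj⟩⟩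
    · refine hf₀ R (fun i => e₀ (t i)) hR ⟨⟨i, ⟨b, ?_⟩, ?_⟩, ⟨j, ⟨c, ?_⟩, ?_⟩⟩
      · exact congrArg e₀ hb
      · rintro ⟨a, ha⟩
        exact hi ⟨a, he₀ ha⟩
      · exact (hs₀ c).symm.trans (congrArg e₀ hc)
      · rintro ⟨a, ha⟩
        exact hj ⟨a, he₀ ((hs₀ _).trans ha)⟩
    · refine hf₁ R (fun i => e₁ (t i)) hR ⟨⟨i, ⟨b, ?_⟩, ?_⟩, ⟨j, ⟨c, ?_⟩, ?_⟩⟩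
      · exact congrArg e₁ hb
      · rintro ⟨a, ha⟩
        exact hi ⟨a, he₁ ha⟩
      · exact (hs₁ c).symm.trans (congrArg e₁ hc)
      · rintro ⟨a, ha⟩
        exact hj ⟨a, he₁ ((hs₁ _).trans ha)⟩

end Amalgam

/-! ### One-point extensions -/

/-- The tuples on which a one-point extension `E = D ∪ {w'}` may carry relations, transported
back along an injection `e` into `E` that matches up the points concerned. -/
lemma range_trichotomy {n : ℕ} {A B D X E : Type*} {e : X → E} (he : Function.Injective e)
    {iAB : A → B} {iBD : B → D} {k : D → X} {w x : X} {kE : D → E} {wE xE : E}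
    (hk : ∀ d, e (k d) = kE d) (hw : e w = wE) (hx : e x = xE) {t : Fin n → X}
    (h : (∀ i, e (t i) ∈ Set.range kE) ∨
      (∀ i, e (t i) = wE ∨ e (t i) ∈ Set.range (fun b => kE (iBD b))) ∨
      (∀ i, e (t i) = wE ∨ e (t i) = xE ∨
        e (t i) ∈ Set.range (fun a => kE (iBD (iAB a))))) :
    (∀ i, t i ∈ Set.range k) ∨
      (∀ i, t i = w ∨ t i ∈ Set.range (fun b => k (iBD b))) ∨
      (∀ i, t i = w ∨ t i = x ∨ t i ∈ Set.range (fun a => k (iBD (iAB a)))) := by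
  subst hw hx
  simpa only [← hk, Set.mem_range, he.eq_iff] using h

end CDP

/-- The free superposition of two Fraïssé classes in disjoint finite relational
languages, each satisfying SFAP, satisfies SFAP. -/
theorem freeSuperposition_sfap
    (L₀ : FirstOrder.Language.{u, v}) (L₁ : FirstOrder.Language.{u, v})
    [L₀.IsRelational] [L₁.IsRelational]
    (hfin₀ : Finite (Σ n, L₀.Relations n)) (hfin₁ : Finite (Σ n, L₁.Relations n))
    (K₀ : Set (CategoryTheory.Bundled.{w} L₀.Structure))
    (K₁ : Set (CategoryTheory.Bundled.{w} L₁.Structure))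
    (hK₀ : CDP.IsFraisseClass K₀) (hK₁ : CDP.IsFraisseClass K₁)
    (hSFAP₀ : CDP.SFAP K₀) (hSFAP₁ : CDP.SFAP K₁) :
    CDP.SFAP (CDP.freeSuperposition K₀ K₁) := by
  refine ⟨CDP.freeSuperposition_fap hK₀ hK₁ hSFAP₀.1 hSFAP₁.1, ?_⟩
  intro A C hA hC iAC v w hvw B hB iAB Bσ hσ jσ vσ hvσ hqσ Bτ hτ jτ wτ hwτ hqτ D hD iBD v' hv' hqD
  obtain ⟨E₀, hE₀, k₀, w₀, hw₀, hq₀, hC₀, hr₀⟩ := hSFAP₀.2 _ _ hA.1 hC.1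
    (CDP.redEmb LHom.sumInl iAC) v w hvw _ hB.1 (CDP.redEmb LHom.sumInl iAB)
    _ hσ.1 (CDP.redEmb LHom.sumInl jσ) vσ hvσ (hqσ.red _)
    _ hτ.1 (CDP.redEmb LHom.sumInl jτ) wτ hwτ (hqτ.red _)
    _ hD.1 (CDP.redEmb LHom.sumInl iBD) v' hv' (hqD.red _)
  obtain ⟨E₁, hE₁, k₁, w₁, hw₁, hq₁, hC₁, hr₁⟩ := hSFAP₁.2 _ _ hA.2 hC.2
    (CDP.redEmb LHom.sumInr iAC) v w hvw _ hB.2 (CDP.redEmb LHom.sumInr iAB)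
    _ hσ.2 (CDP.redEmb LHom.sumInr jσ) vσ hvσ (hqσ.red _)
    _ hτ.2 (CDP.redEmb LHom.sumInr jτ) wτ hwτ (hqτ.red _)
    _ hD.2 (CDP.redEmb LHom.sumInr iBD) v' hv' (hqD.red _)
  -- `E` has underlying set `Option D`, with `none` as the new vertex `w'`.
  let e₀ : Option D → E₀ := fun d => d.elim w₀ k₀
  let e₁ : Option D → E₁ := fun d => d.elim w₁ k₁
  have he₀ : Function.Injective e₀ :=
    Option.injective_iff.2 ⟨k₀.injective, hw₀.1⟩
  have he₁ : Function.Injective e₁ :=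
    Option.injective_iff.2 ⟨k₁.injective, hw₁.1⟩
  refine ⟨CDP.glue e₀ e₁, CDP.glue_mem hK₀ hK₁ hE₀ hE₁ he₀ he₁,
    CDP.glueEmb some k₀ k₁ (fun _ => rfl) (fun _ => rfl), none, ⟨?_, ?_⟩, ?_, ?_, ?_⟩
  · rintro ⟨d, hd⟩
    cases hd
  · rintro (_ | d)
    · exact Or.inl rfl
    · exact Or.inr ⟨d, rfl⟩
  · rintro n (R | R) t
    · refine Iff.trans (iff_of_eq ?_) (hq₀ R t)
      refine congrArg (RelMap R) (funext fun i => ?_)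
      beta_reduce
      rcases t i with _ | b <;> rfl
    · refine Iff.trans (iff_of_eq ?_) (hq₁ R t)
      refine congrArg (RelMap R) (funext fun i => ?_)
      beta_reduce
      rcases t i with _ | b <;> rfl
  · rintro n (R | R) t
    · refine Iff.trans (iff_of_eq ?_) (hC₀ R t)
      refine congrArg (RelMap R) (funext fun i => ?_)
      beta_reduce
      rcases t i with a | j
      · rfl
      · fin_cases j <;> rfl
    · refine Iff.trans (iff_of_eq ?_) (hC₁ R t)
      refine congrArg (RelMap R) (funext fun i => ?_)
      beta_reduce
      rcases t i with a | j
      · rfl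
      · fin_cases j <;> rfl
  · rintro n (R | R) t hR
    · exact CDP.range_trichotomy (iAB := iAB) (iBD := iBD) (k := some) he₀
        (fun _ => rfl) rfl rfl (hr₀ R (fun i => e₀ (t i)) hR)
    · exact CDP.range_trichotomy (iAB := iAB) (iBD := iBD) (k := some) he₁
        (fun _ => rfl) rfl rfl (hr₁ R (fun i => e₁ (t i)) hR)
end

section
/- Let L₀ and L₁ be finite relational languages with no symbols in common, and let K₀ and K₁ be Fraïssé classes of finite L₀- and L₁-structures, each satisfying the Substructure Disjoint Amalgamation Property (SDAP). Then the free superposition of K₀ and K₁ satisfies SDAP. -/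
/-!
Every structure built below lives on an explicit carrier and gets its relations by pulling them
back along an injection into a member of the class, so membership follows from heredity. Since the
two languages share no symbols, such structures can be superposed as soon as their carriers agree,
and types over a superposition split into the types over the two reducts
(`qf1Eq_iff`, `qf2Eq_iff`).

*Disjoint amalgamation.* Disjoint amalgams of the two pairs of reducts are both pulled back to the
carrier `B ⊔ (C ∖ A)` (`exists_dap_on`).

*The extension property.* SDAP for the reducts of `A ⊆ C` gives witnesses `A₀' ⊇ A` and `A₁' ⊇ A`
with possibly different numbers of new points. Being a witness passes to larger structures, because
a type over `B ⊇ A'' ⊇ A'` restricts to one over `A'`. As `A` has a proper extension in each class,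
disjoint amalgamation with copies of `C` over `A` adds arbitrarily many points (`exists_padding`).
Hence both witnesses can be enlarged to the same carriers
`A ⊔ X₀ ⊔ X₁ ⊆ C ⊔ X₀ ⊔ X₁`, where `Xᵢ = Aᵢ' ∖ A` (`exists_witness_on`), and then
superposed. Given types over `B`, the two one-point extensions of `D` obtained from the two
classes are both pulled back to `D ⊔ {w''}` and superposed.
-/

open FirstOrder FirstOrder.Language FirstOrder.Language.Structure CategoryTheory

universe u v w

namespace CDP

/-! ### Padding by disjoint amalgamation -/

/-- If `A` has a proper extension in the class, then every extension of `A` can be enlarged, inside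
the class, by any finite number of new points. -/
lemma exists_padding {L : FirstOrder.Language.{u, v}} {K : Set (Bundled.{w} L.Structure)}
    (hD : DAP K) {A C A₀ : Bundled.{w} L.Structure}
    (hA : A ∈ K) (hC : C ∈ K) (hA₀ : A₀ ∈ K) (iAC : A ↪[L] C) (iAA₀ : A ↪[L] A₀)
    (v : C) (hv : v ∉ Set.range iAC) (Z : Type w) [Finite Z] :
    ∃ P ∈ K, ∃ (p : A₀ ↪[L] P) (q : Z → P), Function.Injective q ∧ ∀ z, q z ∉ Set.range p := by
  induction Z using Finite.induction_empty_option with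
  | of_equiv e ih =>
    obtain ⟨P, hP, p, q, hq, hqp⟩ := ih
    exact ⟨P, hP, p, q ∘ e.symm, hq.comp e.symm.injective, fun z => hqp _⟩
  | h_empty =>
    exact ⟨A₀, hA₀, Embedding.refl L A₀, fun z => z.elim, fun z => z.elim, fun z => z.elim⟩
  | h_option ih =>
    obtain ⟨P, hP, p, q, hq, hqp⟩ := ih
    obtain ⟨D, hDK, r, s, hrs, hdis⟩ := hD A P C hA hP hC (p.comp iAA₀) iAC
    have hsv : s v ∉ Set.range r := by
      intro h
      have : s v ∈ Set.range r ∩ Set.range s := ⟨h, ⟨_, rfl⟩⟩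
      rw [hdis, hrs] at this
      obtain ⟨a, ha⟩ := this
      exact hv ⟨a, s.injective ha⟩
    refine ⟨D, hDK, r.comp p, fun o => o.elim (s v) (fun z => r (q z)), ?_, ?_⟩
    · rintro (_ | x) (_ | y) hxy
      · rfl
      · exact (hsv ⟨_, hxy.symm⟩).elim
      · exact (hsv ⟨_, hxy⟩).elim
      · exact congrArg some (hq (r.injective hxy))
    · rintro (_ | x) ⟨a, ha⟩
      · exact hsv ⟨_, ha⟩
      · exact hqp x ⟨a, r.injective ha⟩

/-! ### Structures and witnesses on prescribed carriers -/

section Pullback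

variable {L : FirstOrder.Language.{u, v}} [L.IsRelational]

/-- The relational structure on `X` pulled back along `φ : X → M`. -/
def pull (M : Bundled.{w} L.Structure) {X : Type w} (φ : X → M) : Bundled.{w} L.Structure :=
  ⟨X, { funMap := fun f => isEmptyElim f, RelMap := fun R t => RelMap R (φ ∘ t) }⟩

/-- An injection is an embedding of the structure pulled back along it. -/
def pullEmb (M : Bundled.{w} L.Structure) {X : Type w} (φ : X → M) (hφ : Function.Injective φ) :
    pull M φ ↪[L] M where
  toFun := φ
  inj' := hφ
  map_fun' f := isEmptyElim f
  map_rel' _ _ := Iff.rfl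

/-- An embedding into `M` that factors through `φ : X → M` is an embedding into the structure
pulled back along `φ`. -/
def pullLift {M N : Bundled.{w} L.Structure} {X : Type w} (φ : X → M) (g : N ↪[L] M)
    (h : N → X) (hg : ∀ x, φ (h x) = g x) : N ↪[L] pull M φ where
  toFun := h
  inj' x y hxy := g.injective (by rw [← hg, ← hg, hxy])
  map_fun' f := isEmptyElim f
  map_rel' R t := by
    have : φ ∘ (h ∘ t) = g ∘ t := funext fun i => hg (t i)
    change RelMap R (φ ∘ (h ∘ t)) ↔ _
    rw [this]
    exact g.map_rel R t

/-- Closure under substructures, phrased through embeddings. -/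
def Hereditary (K : Set (Bundled.{w} L.Structure)) : Prop :=
  ∀ M ∈ K, ∀ N : Bundled.{w} L.Structure, Nonempty (N ↪[L] M) → N ∈ K

variable {K : Set (Bundled.{w} L.Structure)}

/-- A disjoint amalgam of `B` and `C` over `A` can be taken on the carrier `B ⊔ (C ∖ A)`, with
underlying maps that do not depend on the structures. -/
lemma exists_dap_on (hH : Hereditary K) (hD : DAP K) {A B C : Bundled.{w} L.Structure}
    (hA : A ∈ K) (hB : B ∈ K) (hC : C ∈ K) (f : A ↪[L] B) (g : A ↪[L] C)
    (s' : C → B ⊕ {c : C // c ∉ Set.range g})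
    (hs : ∀ a, s' (g a) = Sum.inl (f a)) (hs' : ∀ c, s' c.1 = Sum.inr c) :
    ∃ S : L.Structure (B ⊕ {c : C // c ∉ Set.range g}), (⟨_, S⟩ : Bundled _) ∈ K ∧
      (∃ r : B ↪[L] (⟨_, S⟩ : Bundled L.Structure), ⇑r = Sum.inl) ∧
      ∃ s : C ↪[L] (⟨_, S⟩ : Bundled L.Structure), ⇑s = s' := by
  obtain ⟨D, hDK, r, s, hrs, hdis⟩ := hD A B C hA hB hC f g
  have hrs' : ∀ a, r (f a) = s (g a) := fun a => DFunLike.congr_fun hrs a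
  let φ : B ⊕ {c : C // c ∉ Set.range g} → D := Sum.elim r (fun c => s c.1)
  have hφ : Function.Injective φ := by
    have key : ∀ b (c : {c : C // c ∉ Set.range g}), r b ≠ s c.1 := by
      intro b c hbc
      have : s c.1 ∈ Set.range r ∩ Set.range s := ⟨⟨b, hbc⟩, ⟨_, rfl⟩⟩
      rw [hdis] at this
      obtain ⟨a, ha⟩ := this
      exact c.2 ⟨a, s.injective ((hrs' a).symm.trans ha)⟩
    exact Function.Injective.sumElim r.injective (s.injective.comp Subtype.val_injective) key
  refine ⟨(pull D φ).str, hH D hDK (pull D φ) ⟨pullEmb D φ hφ⟩,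
    ⟨pullLift φ r Sum.inl fun _ => rfl, rfl⟩, ⟨pullLift φ s s' fun c => ?_, rfl⟩⟩
  by_cases hc : c ∈ Set.range g
  · obtain ⟨a, rfl⟩ := hc
    rw [hs]
    exact hrs' a
  · rw [hs' ⟨c, hc⟩]
    rfl

/-- SDAP witnesses for `A ⊆ C` exist on the carriers `A ⊔ Y ⊆ C ⊔ Y` for all finite `Y`
containing a copy of a certain finite set `X`. -/
lemma exists_witness_on (hF : ∀ M ∈ K, Finite M) (hH : Hereditary K) (hS : SDAP K)
    {A C : Bundled.{w} L.Structure} (hA : A ∈ K) (hC : C ∈ K) (iAC : A ↪[L] C) (v w : C)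
    (h2 : IsTwoPointExt iAC v w) :
    ∃ X : Type w, Finite X ∧ ∀ (Y Z : Type w) [Finite Z], (Y ≃ X ⊕ Z) →
      ∃ S : L.Structure (C ⊕ Y), (⟨_, S⟩ : Bundled _) ∈ K ∧
        ∃ (iCC' : C ↪[L] (⟨_, S⟩ : Bundled L.Structure))
          (iAA' : A ↪[L] pull (⟨_, S⟩ : Bundled L.Structure) (Sum.map iAC (id : Y → Y)))
          (iA'C' : pull (⟨_, S⟩ : Bundled L.Structure) (Sum.map iAC (id : Y → Y)) ↪[L]
            (⟨_, S⟩ : Bundled L.Structure)),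
          ⇑iCC' = Sum.inl ∧ ⇑iAA' = Sum.inl ∧ ⇑iA'C' = Sum.map iAC id ∧
          SDAPWitness K iAC v w _ _ iAA' iA'C' iCC' := by
  obtain ⟨A₀, C₀, hA₀, hC₀, iAA₀, iA₀C₀, iCC₀, hcomm, hdis₀, -, hW⟩ := hS.2 A C hA hC iAC v w h2
  have hcomm' : ∀ a, iA₀C₀ (iAA₀ a) = iCC₀ (iAC a) := fun a => DFunLike.congr_fun hcomm a
  have := hF A₀ hA₀
  refine ⟨{a : A₀ // a ∉ Set.range iAA₀}, inferInstance, fun Y Z _ e => ?_⟩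
  obtain ⟨P, hP, p, q, hq, hqp⟩ := exists_padding hS.1 hA hC hA₀ iAC iAA₀ v h2.2.1 Z
  obtain ⟨D, hDK, r, s, hrs, hdis⟩ := hS.1 A₀ P C₀ hA₀ hP hC₀ p iA₀C₀
  have hrs' : ∀ a, r (p a) = s (iA₀C₀ a) := fun a => DFunLike.congr_fun hrs a
  -- `C ⊔ Y` sits inside the amalgam of `C₀` and the padded structure `P` over `A₀`.
  let ψ : {a : A₀ // a ∉ Set.range iAA₀} ⊕ Z → P := Sum.elim (fun a => p a.1) q
  have hψ : Function.Injective ψ :=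
    Function.Injective.sumElim (p.injective.comp Subtype.val_injective) hq
      fun a z h => hqp z ⟨_, h⟩
  let φ : C ⊕ Y → D := Sum.elim (fun c => s (iCC₀ c)) (fun y => r (ψ (e y)))
  have hφ : Function.Injective φ := by
    refine Function.Injective.sumElim (s.injective.comp iCC₀.injective)
      (r.injective.comp (hψ.comp e.injective)) fun c y hcy => ?_
    have : r (ψ (e y)) ∈ Set.range r ∩ Set.range s := ⟨⟨_, rfl⟩, ⟨_, hcy⟩⟩
    rw [hdis] at this
    obtain ⟨a, ha⟩ := this
    have ha' : p a = ψ (e y) := r.injective ha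
    rcases h : e y with x | z
    · rw [h] at ha' hcy
      have hax : a = x.1 := p.injective ha'
      have h1 : iCC₀ c = iA₀C₀ x.1 := s.injective (hcy.trans (hrs' x.1))
      have : iA₀C₀ x.1 ∈ Set.range iA₀C₀ ∩ Set.range iCC₀ := ⟨⟨_, rfl⟩, ⟨_, h1⟩⟩
      rw [hdis₀] at this
      obtain ⟨a', ha''⟩ := this
      exact x.2 ⟨a', iA₀C₀.injective ha''⟩
    · rw [h] at ha'
      exact hqp z ⟨a, ha'⟩
  let m : A ⊕ Y → C ⊕ Y := Sum.map iAC id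
  have hm : Function.Injective m := iAC.injective.sumMap Function.injective_id
  let iCC' : C ↪[L] pull D φ := pullLift φ (s.comp iCC₀) Sum.inl fun _ => rfl
  let iAA' : A ↪[L] pull (pull D φ) m := pullLift m (iCC'.comp iAC) Sum.inl fun _ => rfl
  let iA'C' : pull (pull D φ) m ↪[L] pull D φ := pullEmb (pull D φ) m hm
  -- The inclusion of `A₀` into the enlarged structure on `A ⊔ Y`.
  let k₀ : A₀ → A ⊕ Y := fun a =>
    open Classical in
    if h : a ∈ Set.range iAA₀ then Sum.inl h.choose else Sum.inr (e.symm (Sum.inl ⟨a, h⟩))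
  have hk₀ : ∀ a, k₀ (iAA₀ a) = Sum.inl a := by
    intro a
    have h : iAA₀ a ∈ Set.range iAA₀ := ⟨a, rfl⟩
    have : k₀ (iAA₀ a) = Sum.inl h.choose := dif_pos h
    rw [this, iAA₀.injective h.choose_spec]
  have hk : ∀ a, φ (m (k₀ a)) = s (iA₀C₀ a) := by
    intro a
    by_cases h : a ∈ Set.range iAA₀
    · obtain ⟨a, rfl⟩ := h
      rw [hk₀]
      exact congrArg s (hcomm' a).symm
    · have : k₀ a = Sum.inr (e.symm (Sum.inl ⟨a, h⟩)) := dif_neg h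
      rw [this]
      change r (ψ (e (e.symm (Sum.inl ⟨a, h⟩)))) = _
      rw [e.apply_symm_apply]
      exact hrs' a
  let k : A₀ ↪[L] pull (pull D φ) m :=
    pullLift m (pullLift φ (s.comp iA₀C₀) (fun a => m (k₀ a)) hk) k₀ fun _ => rfl
  have hQ : ∀ (B : Bundled.{w} L.Structure) (j : pull (pull D φ) m ↪[L] B) (b : B) (c : C),
      QF1Eq j b iA'C' (iCC' c) → QF1Eq (j.comp k) b iA₀C₀ (iCC₀ c) := by
    intro B j b c h n R t
    have h' := h R (fun i => (t i).map k₀)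
    have e1 : (fun i => ((t i).map k₀).elim b j) = fun i => (t i).elim b (j.comp k) := by
      funext i
      cases t i <;> rfl
    have e2 : φ ∘ (fun i => ((t i).map k₀).elim (iCC' c) iA'C') =
        s ∘ fun i => (t i).elim (iCC₀ c) iA₀C₀ := by
      funext i
      simp only [Function.comp_apply]
      cases t i
      · rfl
      · exact hk _
    refine (iff_of_eq (congrArg (RelMap R) e1)).symm.trans (h'.trans ?_)
    exact (iff_of_eq (congrArg (RelMap R) e2)).trans (s.map_rel R _)
  refine ⟨(pull D φ).str, hH D hDK (pull D φ) ⟨pullEmb D φ hφ⟩, iCC', iAA', iA'C', rfl, rfl, rfl,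
    rfl, ?_, ?_, ?_⟩
  · apply Set.Subset.antisymm
    · rintro _ ⟨⟨x | y, rfl⟩, ⟨c, hc⟩⟩
      · exact ⟨x, rfl⟩
      · exact (Sum.inl_ne_inr hc).elim
    · rintro _ ⟨a, rfl⟩
      exact ⟨⟨Sum.inl a, rfl⟩, ⟨iAC a, rfl⟩⟩
  · have hout : ∀ c, c ∉ Set.range iAC → iCC' c ∉ Set.range iA'C' := by
      rintro c hc ⟨x | y, h⟩
      · exact hc ⟨x, Sum.inl_injective h⟩
      · exact Sum.inr_ne_inl h
    refine ⟨fun h => h2.1 (iCC'.injective h), hout v h2.2.1, hout w h2.2.2.1, ?_⟩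
    rintro (c | y)
    · rcases h2.2.2.2 c with rfl | rfl | ⟨a, rfl⟩
      · exact Or.inl rfl
      · exact Or.inr (Or.inl rfl)
      · exact Or.inr (Or.inr ⟨Sum.inl a, rfl⟩)
    · exact Or.inr (Or.inr ⟨Sum.inr y, rfl⟩)
  · intro B hB iB Bσ hBσ jσ vσ hσ hqσ Bτ hBτ jτ wτ hτ hqτ D' hD' iBD v'' hv'' hqv
    obtain ⟨E, hE, iDE, w'', h1, h3, h4⟩ := hW B hB (iB.comp k) Bσ hBσ jσ vσ hσ
      (hQ _ _ _ _ hqσ) Bτ hBτ jτ wτ hτ (hQ _ _ _ _ hqτ) D' hD' iBD v'' hv'' hqv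
    refine ⟨E, hE, iDE, w'', h1, h3, ?_⟩
    have : iAA' = k.comp iAA₀ := by
      ext a
      exact (hk₀ a).symm
    rw [this]
    intro n R t
    exact h4 R t

end Pullback

/-! ### Reducts and superpositions -/

section Reduct

variable {L₀ L₁ : FirstOrder.Language.{u, v}}

/-- The `L₀`-reduct of an `(L₀ ∪ L₁)`-structure. -/
abbrev redL (M : Bundled.{w} (L₀.sum L₁).Structure) : Bundled.{w} L₀.Structure :=
  ⟨M, (LHom.sumInl : L₀ →ᴸ L₀.sum L₁).reduct M⟩

/-- The `L₁`-reduct of an `(L₀ ∪ L₁)`-structure. -/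
abbrev redR (M : Bundled.{w} (L₀.sum L₁).Structure) : Bundled.{w} L₁.Structure :=
  ⟨M, (LHom.sumInr : L₁ →ᴸ L₀.sum L₁).reduct M⟩

/-- The superposition of two structures on the same carrier. -/
def superpose {X : Type w} (S₀ : L₀.Structure X) (S₁ : L₁.Structure X) :
    Bundled.{w} (L₀.sum L₁).Structure :=
  ⟨X, @sumStructure L₀ L₁ X S₀ S₁⟩

variable {M N : Bundled.{w} (L₀.sum L₁).Structure}

/-- An embedding, seen as an embedding of `L₀`-reducts. -/
def redLEmb (f : M ↪[L₀.sum L₁] N) : redL M ↪[L₀] redL N where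
  toFun := f
  inj' := f.injective
  map_fun' g x := f.map_fun (Sum.inl g) x
  map_rel' R x := f.map_rel (Sum.inl R) x

/-- An embedding, seen as an embedding of `L₁`-reducts. -/
def redREmb (f : M ↪[L₀.sum L₁] N) : redR M ↪[L₁] redR N where
  toFun := f
  inj' := f.injective
  map_fun' g x := f.map_fun (Sum.inr g) x
  map_rel' R x := f.map_rel (Sum.inr R) x

/-- A map that is an embedding for both reducts is an embedding. -/
def superposeEmb (f₀ : redL M ↪[L₀] redL N) (f₁ : redR M ↪[L₁] redR N)
    (f : M → N) (h₀ : ⇑f₀ = f) (h₁ : ⇑f₁ = f) : M ↪[L₀.sum L₁] N where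
  toFun := f
  inj' := h₀ ▸ f₀.injective
  map_fun' {n} g x := by
    rcases g with g | g
    · subst h₀
      exact f₀.map_fun g x
    · subst h₁
      exact f₁.map_fun g x
  map_rel' {n} R x := by
    rcases R with R | R
    · subst h₀
      exact f₀.map_rel R x
    · subst h₁
      exact f₁.map_rel R x

lemma redLEmb_superposeEmb (f₀ : redL M ↪[L₀] redL N) (f₁ : redR M ↪[L₁] redR N)
    (f : M → N) (h₀ : ⇑f₀ = f) (h₁ : ⇑f₁ = f) : redLEmb (superposeEmb f₀ f₁ f h₀ h₁) = f₀ :=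
  DFunLike.coe_injective h₀.symm

lemma redREmb_superposeEmb (f₀ : redL M ↪[L₀] redL N) (f₁ : redR M ↪[L₁] redR N)
    (f : M → N) (h₀ : ⇑f₀ = f) (h₁ : ⇑f₁ = f) : redREmb (superposeEmb f₀ f₁ f h₀ h₁) = f₁ :=
  DFunLike.coe_injective h₁.symm

variable {A D E : Bundled.{w} (L₀.sum L₁).Structure}

lemma qf1Eq_iff (f : A ↪[L₀.sum L₁] D) (x : D) (g : A ↪[L₀.sum L₁] E) (y : E) :
    QF1Eq f x g y ↔ @QF1Eq L₀ (redL A) (redL D) (redL E) _ _ _ (redLEmb f) x (redLEmb g) y ∧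
      @QF1Eq L₁ (redR A) (redR D) (redR E) _ _ _ (redREmb f) x (redREmb g) y := by
  refine ⟨fun h => ⟨fun R t => h (Sum.inl R) t, fun R t => h (Sum.inr R) t⟩, fun h n R t => ?_⟩
  rcases R with R | R
  · exact h.1 R t
  · exact h.2 R t

lemma qf2Eq_iff (f : A ↪[L₀.sum L₁] D) (x x' : D) (g : A ↪[L₀.sum L₁] E) (y y' : E) :
    QF2Eq f x x' g y y' ↔
      @QF2Eq L₀ (redL A) (redL D) (redL E) _ _ _ (redLEmb f) x x' (redLEmb g) y y' ∧
      @QF2Eq L₁ (redR A) (redR D) (redR E) _ _ _ (redREmb f) x x' (redREmb g) y y' := by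
  refine ⟨fun h => ⟨fun R t => h (Sum.inl R) t, fun R t => h (Sum.inr R) t⟩, fun h n R t => ?_⟩
  rcases R with R | R
  · exact h.1 R t
  · exact h.2 R t

end Reduct

/-! ### One-point extensions -/

section OnePoint

variable {L : FirstOrder.Language.{u, v}} [L.IsRelational] {K : Set (Bundled.{w} L.Structure)}

/-- A one-point extension `E` of `D` can be moved to the carrier `Option D`, keeping the types of
the new point. -/
lemma exists_ext_on_option (hH : Hereditary K) {A B Bτ C D E : Bundled.{w} L.Structure}
    (hE : E ∈ K) (iDE : D ↪[L] E) (z : E) (hz : IsOnePointExt iDE z)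
    (iBD : B ↪[L] D) (jτ : B ↪[L] Bτ) (wτ : Bτ) (h1 : QF1Eq (iDE.comp iBD) z jτ wτ)
    (iAB : A ↪[L] B) (x : D) (iAC : A ↪[L] C) (v w : C)
    (h2 : QF2Eq ((iDE.comp iBD).comp iAB) (iDE x) z iAC v w) :
    ∃ S : L.Structure (Option D), (⟨_, S⟩ : Bundled _) ∈ K ∧
      ∃ i : D ↪[L] (⟨_, S⟩ : Bundled L.Structure), ⇑i = some ∧
        @QF1Eq L B (⟨_, S⟩ : Bundled L.Structure) Bτ _ _ _ (i.comp iBD) none jτ wτ ∧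
        @QF2Eq L A (⟨_, S⟩ : Bundled L.Structure) C _ _ _
          ((i.comp iBD).comp iAB) (some x) none iAC v w := by
  let φ : Option D → E := fun o => o.elim z iDE
  have hφ : Function.Injective φ := by
    rintro (_ | a) (_ | b) hab
    · rfl
    · exact (hz.1 ⟨_, hab.symm⟩).elim
    · exact (hz.1 ⟨_, hab⟩).elim
    · exact congrArg some (iDE.injective hab)
  refine ⟨(pull E φ).str, hH E hE (pull E φ) ⟨pullEmb E φ hφ⟩,
    pullLift φ iDE some fun _ => rfl, rfl, ?_, ?_⟩
  · intro n R t
    refine Iff.trans (iff_of_eq ?_) (h1 R t)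
    change RelMap R (φ ∘ _) = _
    congr 1
    funext i
    simp only [Function.comp_apply]
    cases t i <;> rfl
  · intro n R t
    refine Iff.trans (iff_of_eq ?_) (h2 R t)
    change RelMap R (φ ∘ _) = _
    congr 1
    funext i
    simp only [Function.comp_apply]
    rcases t i with a | a
    · rfl
    · fin_cases a <;> rfl

end OnePoint

/-! ### The free superposition -/

section Superposition

variable {L₀ L₁ : FirstOrder.Language.{u, v}} [L₀.IsRelational] [L₁.IsRelational]
  {K₀ : Set (Bundled.{w} L₀.Structure)} {K₁ : Set (Bundled.{w} L₁.Structure)}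

lemma dap_freeSuperposition (hH₀ : Hereditary K₀) (hH₁ : Hereditary K₁)
    (hD₀ : DAP K₀) (hD₁ : DAP K₁) : DAP (freeSuperposition K₀ K₁) := by
  classical
  intro A B C hA hB hC f g
  let s' : C → B ⊕ {c : C // c ∉ Set.range g} := fun c =>
    if h : c ∈ Set.range g then Sum.inl (f h.choose) else Sum.inr ⟨c, h⟩
  have hs : ∀ a, s' (g a) = Sum.inl (f a) := by
    intro a
    have h : g a ∈ Set.range g := ⟨a, rfl⟩
    have : s' (g a) = Sum.inl (f h.choose) := dif_pos h
    rw [this, g.injective h.choose_spec]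
  have hs' : ∀ c : {c : C // c ∉ Set.range g}, s' c.1 = Sum.inr c := fun c => dif_neg c.2
  obtain ⟨S₀, hS₀, ⟨r₀, hr₀⟩, s₀, hs₀⟩ :=
    exists_dap_on hH₀ hD₀ hA.1 hB.1 hC.1 (redLEmb f) (redLEmb g) s' hs hs'
  obtain ⟨S₁, hS₁, ⟨r₁, hr₁⟩, s₁, hs₁⟩ :=
    exists_dap_on hH₁ hD₁ hA.2 hB.2 hC.2 (redREmb f) (redREmb g) s' hs hs'
  refine ⟨superpose S₀ S₁, ⟨hS₀, hS₁⟩,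
    superposeEmb (N := superpose S₀ S₁) r₀ r₁ Sum.inl hr₀ hr₁,
    superposeEmb (N := superpose S₀ S₁) s₀ s₁ s' hs₀ hs₁, ?_, ?_⟩
  · ext a
    exact (hs a).symm
  · apply Set.Subset.antisymm
    · rintro _ ⟨⟨b, rfl⟩, ⟨c, hc⟩⟩
      by_cases h : c ∈ Set.range g
      · obtain ⟨a, rfl⟩ := h
        exact ⟨a, (hs a).symm.trans hc⟩
      · exact (Sum.inr_ne_inl ((hs' ⟨c, h⟩).symm.trans hc)).elim
    · rintro _ ⟨a, rfl⟩
      exact ⟨⟨f a, rfl⟩, ⟨g a, hs a⟩⟩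

lemma sdap_extension_freeSuperposition (hF₀ : ∀ M ∈ K₀, Finite M) (hF₁ : ∀ M ∈ K₁, Finite M)
    (hH₀ : Hereditary K₀) (hH₁ : Hereditary K₁) (hS₀ : SDAP K₀) (hS₁ : SDAP K₁)
    (A C : Bundled.{w} (L₀.sum L₁).Structure)
    (hA : A ∈ freeSuperposition K₀ K₁) (hC : C ∈ freeSuperposition K₀ K₁)
    (iAC : A ↪[L₀.sum L₁] C) (v w : C) (h2 : IsTwoPointExt iAC v w) :
    ∃ A' C' : Bundled.{w} (L₀.sum L₁).Structure,
      A' ∈ freeSuperposition K₀ K₁ ∧ C' ∈ freeSuperposition K₀ K₁ ∧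
        ∃ (iAA' : A ↪[L₀.sum L₁] A') (iA'C' : A' ↪[L₀.sum L₁] C') (iCC' : C ↪[L₀.sum L₁] C'),
          SDAPWitness (freeSuperposition K₀ K₁) iAC v w A' C' iAA' iA'C' iCC' := by
  obtain ⟨X₀, hX₀, H₀⟩ := exists_witness_on hF₀ hH₀ hS₀ hA.1 hC.1 (redLEmb iAC) v w h2
  obtain ⟨X₁, hX₁, H₁⟩ := exists_witness_on hF₁ hH₁ hS₁ hA.2 hC.2 (redREmb iAC) v w h2
  obtain ⟨S₀, hSK₀, iCC₀, iAA₀, iA₀C₀, hc₀, ha₀, hac₀, W₀⟩ :=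
    H₀ (X₀ ⊕ X₁) X₁ (Equiv.refl _)
  obtain ⟨S₁, hSK₁, iCC₁, iAA₁, iA₁C₁, hc₁, ha₁, hac₁, W₁⟩ :=
    H₁ (X₀ ⊕ X₁) X₀ (Equiv.sumComm _ _)
  let m : A ⊕ (X₀ ⊕ X₁) → C ⊕ (X₀ ⊕ X₁) := Sum.map iAC id
  let C' : Bundled.{w} (L₀.sum L₁).Structure := superpose S₀ S₁
  let A' : Bundled.{w} (L₀.sum L₁).Structure :=
    superpose (pull (⟨_, S₀⟩ : Bundled _) m).str (pull (⟨_, S₁⟩ : Bundled _) m).str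
  let iCC' : C ↪[L₀.sum L₁] C' := superposeEmb (N := C') iCC₀ iCC₁ Sum.inl hc₀ hc₁
  let iAA' : A ↪[L₀.sum L₁] A' := superposeEmb (N := A') iAA₀ iAA₁ Sum.inl ha₀ ha₁
  let iA'C' : A' ↪[L₀.sum L₁] C' :=
    superposeEmb (M := A') (N := C') iA₀C₀ iA₁C₁ m hac₀ hac₁
  have ec₀ : redLEmb iCC' = iCC₀ := redLEmb_superposeEmb (N := C') iCC₀ iCC₁ _ hc₀ hc₁
  have ec₁ : redREmb iCC' = iCC₁ := redREmb_superposeEmb (N := C') iCC₀ iCC₁ _ hc₀ hc₁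
  have ea₀ : redLEmb iAA' = iAA₀ := redLEmb_superposeEmb (N := A') iAA₀ iAA₁ _ ha₀ ha₁
  have ea₁ : redREmb iAA' = iAA₁ := redREmb_superposeEmb (N := A') iAA₀ iAA₁ _ ha₀ ha₁
  have eac₀ : redLEmb iA'C' = iA₀C₀ :=
    redLEmb_superposeEmb (M := A') (N := C') iA₀C₀ iA₁C₁ _ hac₀ hac₁
  have eac₁ : redREmb iA'C' = iA₁C₁ :=
    redREmb_superposeEmb (M := A') (N := C') iA₀C₀ iA₁C₁ _ hac₀ hac₁
  rw [← ec₀, ← ea₀, ← eac₀] at W₀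
  rw [← ec₁, ← ea₁, ← eac₁] at W₁
  obtain ⟨k1, k2, k3, W₀⟩ := W₀
  obtain ⟨-, -, -, W₁⟩ := W₁
  refine ⟨A', C', ⟨hH₀ _ hSK₀ _ ⟨iA₀C₀⟩, hH₁ _ hSK₁ _ ⟨iA₁C₁⟩⟩, ⟨hSK₀, hSK₁⟩,
    iAA', iA'C', iCC', ?_, k2, k3, ?_⟩
  · ext a
    rfl
  intro B hB iB Bσ hBσ jσ vσ hσ hqσ Bτ hBτ jτ wτ hτ hqτ D hD iBD v'' hv'' hqv
  rw [qf1Eq_iff] at hqσ hqτ hqv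
  obtain ⟨E₀, hE₀, iDE₀, w₀, g1, g2, g3⟩ := W₀ (redL B) hB.1 (redLEmb iB)
    (redL Bσ) hBσ.1 (redLEmb jσ) vσ hσ hqσ.1 (redL Bτ) hBτ.1 (redLEmb jτ) wτ hτ hqτ.1
    (redL D) hD.1 (redLEmb iBD) v'' hv'' hqv.1
  obtain ⟨E₁, hE₁, iDE₁, w₁, l1, l2, l3⟩ := W₁ (redR B) hB.2 (redREmb iB)
    (redR Bσ) hBσ.2 (redREmb jσ) vσ hσ hqσ.2 (redR Bτ) hBτ.2 (redREmb jτ) wτ hτ hqτ.2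
    (redR D) hD.2 (redREmb iBD) v'' hv'' hqv.2
  obtain ⟨T₀, hT₀, i₀, hi₀, p1, p2⟩ := exists_ext_on_option hH₀ hE₀ iDE₀ w₀ g1
    (redLEmb iBD) (redLEmb jτ) wτ g2 ((redLEmb iB).comp (redLEmb iAA')) v'' (redLEmb iAC) v w g3
  obtain ⟨T₁, hT₁, i₁, hi₁, q1, q2⟩ := exists_ext_on_option hH₁ hE₁ iDE₁ w₁ l1
    (redREmb iBD) (redREmb jτ) wτ l2 ((redREmb iB).comp (redREmb iAA')) v'' (redREmb iAC) v w l3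
  let E : Bundled.{w} (L₀.sum L₁).Structure := superpose T₀ T₁
  let iDE : D ↪[L₀.sum L₁] E := superposeEmb (N := E) i₀ i₁ some hi₀ hi₁
  have e₀ : redLEmb iDE = i₀ := redLEmb_superposeEmb (N := E) i₀ i₁ _ hi₀ hi₁
  have e₁ : redREmb iDE = i₁ := redREmb_superposeEmb (N := E) i₀ i₁ _ hi₀ hi₁
  rw [← e₀] at p1 p2
  rw [← e₁] at q1 q2
  refine ⟨E, ⟨hT₀, hT₁⟩, iDE, (none : Option D), ⟨?_, ?_⟩, ?_, ?_⟩
  · rintro ⟨d, hd⟩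
    exact Option.some_ne_none d hd
  · rintro (_ | d)
    · exact Or.inl rfl
    · exact Or.inr ⟨d, rfl⟩
  · exact (qf1Eq_iff (D := E) _ _ _ _).2 ⟨p1, q1⟩
  · exact (qf2Eq_iff (D := E) _ _ _ _ _ _).2 ⟨p2, q2⟩

end Superposition

end CDP

/-- The free superposition of two Fraïssé classes in disjoint finite relational
languages, each satisfying SDAP, satisfies SDAP. -/
theorem freeSuperposition_sdap
    (L₀ : FirstOrder.Language.{u, v}) (L₁ : FirstOrder.Language.{u, v})
    [L₀.IsRelational] [L₁.IsRelational]
    (hfin₀ : Finite (Σ n, L₀.Relations n)) (hfin₁ : Finite (Σ n, L₁.Relations n))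
    (K₀ : Set (CategoryTheory.Bundled.{w} L₀.Structure))
    (K₁ : Set (CategoryTheory.Bundled.{w} L₁.Structure))
    (hK₀ : CDP.IsFraisseClass K₀) (hK₁ : CDP.IsFraisseClass K₁)
    (hSDAP₀ : CDP.SDAP K₀) (hSDAP₁ : CDP.SDAP K₁) :
    CDP.SDAP (CDP.freeSuperposition K₀ K₁) := by
  exact ⟨CDP.dap_freeSuperposition hK₀.2.2.2.1 hK₁.2.2.2.1 hSDAP₀.1 hSDAP₁.1,
    CDP.sdap_extension_freeSuperposition hK₀.2.1 hK₁.2.1 hK₀.2.2.2.1 hK₁.2.2.2.1 hSDAP₀ hSDAP₁⟩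
end
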